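/- arXiv:1303.0417 — 2 statements merged into one kernel-verified Lean document; each statement's English description precedes it below -/
import Mathlib

section
/- If a subsequence (x^{(t_m)}) of the IRLS iterates converges to a point x* ∈ ℝ^d, then x* is a stationary point of Φ, i.e. ∇Φ(x*) = 0. -/
open scoped ContDiff RealInnerProductSpace
open Filter

/-- The tangent line of the concave function `s ↦ s ^ q` at `u` lies above its graph. -/
theorem Real.rpow_le_rpow_add_mul_sub {q s u : ℝ} (hq0 : 0 ≤ q) (hq1 : q ≤ 1) (hs : 0 ≤ s)
    (hu : 0 < u) : s ^ q ≤ u ^ q + q * u ^ (q - 1) * (s - u) := by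
  have bernoulli : (1 + (s / u - 1)) ^ q ≤ 1 + q * (s / u - 1) :=
    rpow_one_add_le_one_add_mul_self (by linarith [div_nonneg hs hu.le]) hq0 hq1
  rw [add_sub_cancel, Real.div_rpow hs hu.le, div_le_iff₀ (Real.rpow_pos_of_pos hu q)] at bernoulli
  refine bernoulli.trans_eq ?_
  rw [Real.rpow_sub_one hu.ne']
  field_simp

section IRLS

variable {E ι : Type*} [NormedAddCommGroup E]

/-- The weight of the point `a j` in the reweighted least squares problem at `x`. -/
noncomputable def irlsWeight (a : ι → E) (w : ι → ℝ) (ε q : ℝ) (x : E) (j : ι) : ℝ :=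
  w j * (‖x - a j‖ ^ 2 + ε) ^ (q - 1)

variable {a : ι → E} {w : ι → ℝ} {ε q : ℝ}

theorem irlsWeight_pos (hw : ∀ j, 0 < w j) (hε : 0 < ε) (x : E) (j : ι) :
    0 < irlsWeight a w ε q x j :=
  mul_pos (hw j) (Real.rpow_pos_of_pos (by positivity) _)

theorem continuous_irlsWeight (hε : 0 < ε) (j : ι) :
    Continuous fun x => irlsWeight a w ε q x j := by
  refine continuous_const.mul (Continuous.rpow_const (by fun_prop) fun x => Or.inl ?_)
  positivity

variable [Fintype ι]

theorem sum_irlsWeight_pos [Nonempty ι] (hw : ∀ j, 0 < w j) (hε : 0 < ε) (x : E) :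
    0 < ∑ j, irlsWeight a w ε q x j :=
  Finset.sum_pos (fun j _ => irlsWeight_pos hw hε x j) Finset.univ_nonempty

/-- The smoothed objective `∑ j, w j * (‖x - a j‖ ^ 2 + ε) ^ q`. -/
noncomputable def irlsObjective (a : ι → E) (w : ι → ℝ) (ε q : ℝ) (x : E) : ℝ :=
  ∑ j, w j * (‖x - a j‖ ^ 2 + ε) ^ q

theorem irlsObjective_nonneg (hw : ∀ j, 0 < w j) (hε : 0 < ε) (x : E) :
    0 ≤ irlsObjective a w ε q x :=
  Finset.sum_nonneg fun j _ => mul_nonneg (hw j).le (Real.rpow_nonneg (by positivity) _)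

variable [InnerProductSpace ℝ E]

/-- Completing the square around the weighted barycentre `c` of the points `a j`. -/
theorem sum_mul_norm_sub_sq_of_barycentre (m : ι → ℝ) (a : ι → E) (c x : E)
    (hc : (∑ j, m j) • c = ∑ j, m j • a j) :
    ∑ j, m j * (‖c - a j‖ ^ 2 - ‖x - a j‖ ^ 2) = -((∑ j, m j) * ‖c - x‖ ^ 2) := by
  have centred : ∑ j, m j • (c - a j) = 0 := by
    simp only [smul_sub, Finset.sum_sub_distrib, ← Finset.sum_smul, hc, sub_self]
  have cross : ∑ j, m j * ⟪x - c, c - a j⟫ = 0 := by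
    simp only [← real_inner_smul_right, ← inner_sum, centred, inner_zero_right]
  have expand (j : ι) : m j * (‖c - a j‖ ^ 2 - ‖x - a j‖ ^ 2) =
      -(m j * ‖c - x‖ ^ 2) - 2 * (m j * ⟪x - c, c - a j⟫) := by
    rw [← sub_add_sub_cancel x c (a j), norm_add_sq_real, norm_sub_rev c x]
    ring
  simp only [expand, Finset.sum_sub_distrib, Finset.sum_neg_distrib, ← Finset.mul_sum, cross,
    ← Finset.sum_mul, mul_zero, sub_zero]

/-- One step of iteratively reweighted least squares. -/
noncomputable def irlsStep (a : ι → E) (w : ι → ℝ) (ε q : ℝ) (x : E) : E :=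
  (∑ j, irlsWeight a w ε q x j)⁻¹ • ∑ j, irlsWeight a w ε q x j • a j

theorem continuous_irlsStep [Nonempty ι] (hw : ∀ j, 0 < w j) (hε : 0 < ε) :
    Continuous (irlsStep a w ε q) := by
  have hc (j : ι) := continuous_irlsWeight (a := a) (w := w) (q := q) hε j
  refine Continuous.smul (Continuous.inv₀ (by fun_prop) fun x => ?_) (by fun_prop)
  exact (sum_irlsWeight_pos hw hε x).ne'

theorem sum_irlsWeight_smul_irlsStep [Nonempty ι] (hw : ∀ j, 0 < w j) (hε : 0 < ε) (x : E) :
    (∑ j, irlsWeight a w ε q x j) • irlsStep a w ε q x = ∑ j, irlsWeight a w ε q x j • a j :=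
  smul_inv_smul₀ (sum_irlsWeight_pos hw hε x).ne' _

/-- Sufficient decrease of the objective along one step. -/
theorem irlsObjective_irlsStep_le [Nonempty ι] (hw : ∀ j, 0 < w j) (hε : 0 < ε) (hq0 : 0 ≤ q)
    (hq1 : q ≤ 1) (x : E) :
    irlsObjective a w ε q (irlsStep a w ε q x) ≤ irlsObjective a w ε q x -
      q * ((∑ j, irlsWeight a w ε q x j) * ‖irlsStep a w ε q x - x‖ ^ 2) := by
  have square := sum_mul_norm_sub_sq_of_barycentre (irlsWeight a w ε q x) a
    (irlsStep a w ε q x) x (sum_irlsWeight_smul_irlsStep hw hε x)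
  rw [sub_eq_add_neg, ← mul_neg, ← square, irlsObjective, irlsObjective, Finset.mul_sum,
    ← Finset.sum_add_distrib]
  refine Finset.sum_le_sum fun j _ => ?_
  have tangent := Real.rpow_le_rpow_add_mul_sub hq0 hq1
    (s := ‖irlsStep a w ε q x - a j‖ ^ 2 + ε) (u := ‖x - a j‖ ^ 2 + ε)
    (by positivity) (by positivity)
  refine (mul_le_mul_of_nonneg_left tangent (hw j).le).trans_eq ?_
  rw [irlsWeight]
  ring

/-- Cluster points of the iteration are fixed points of the step. -/
theorem irlsStep_eq_self_of_tendsto [Nonempty ι] (hw : ∀ j, 0 < w j) (hε : 0 < ε) (hq0 : 0 < q)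
    (hq1 : q ≤ 1) {x : ℕ → E} (hx : ∀ t, x (t + 1) = irlsStep a w ε q (x t))
    {φ : ℕ → ℕ} (hφ : Tendsto φ atTop atTop) {y : E}
    (hy : Tendsto (x ∘ φ) atTop (nhds y)) : irlsStep a w ε q y = y := by
  let decrease (z : E) : ℝ := q * ((∑ j, irlsWeight a w ε q z j) * ‖irlsStep a w ε q z - z‖ ^ 2)
  have decrease_nonneg (z : E) : 0 ≤ decrease z :=
    mul_nonneg hq0.le (mul_nonneg (sum_irlsWeight_pos hw hε z).le (sq_nonneg _))
  have decrease_le (t : ℕ) : decrease (x t) ≤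
      irlsObjective a w ε q (x t) - irlsObjective a w ε q (x (t + 1)) := by
    rw [hx t]
    linarith [irlsObjective_irlsStep_le (a := a) hw hε hq0.le hq1 (x t)]
  have anti : Antitone fun t => irlsObjective a w ε q (x t) :=
    antitone_nat_of_succ_le fun t => by linarith [decrease_le t, decrease_nonneg (x t)]
  have lim := tendsto_atTop_ciInf anti
    ⟨0, Set.forall_mem_range.2 fun t => irlsObjective_nonneg hw hε (x t)⟩
  have decrease_lim : Tendsto (fun t => decrease (x t)) atTop (nhds 0) := by
    have diff_lim := lim.sub (lim.comp (tendsto_add_atTop_nat 1))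
    rw [sub_self] at diff_lim
    exact squeeze_zero (fun t => decrease_nonneg (x t)) decrease_le diff_lim
  have decrease_cont : Continuous decrease := by
    have hc (j : ι) := continuous_irlsWeight (a := a) (w := w) (q := q) hε j
    have hs := continuous_irlsStep (a := a) (q := q) hw hε
    fun_prop
  have decrease_eq : decrease y = 0 :=
    tendsto_nhds_unique ((decrease_cont.tendsto y).comp hy) (decrease_lim.comp hφ)
  simpa [decrease, hq0.ne', (sum_irlsWeight_pos hw hε y).ne', sub_eq_zero] using decrease_eq

theorem hasGradientAt_irlsObjective [CompleteSpace E] (hε : 0 < ε) (x : E) :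
    HasGradientAt (irlsObjective a w ε q)
      ((2 * q) • ∑ j, irlsWeight a w ε q x j • (x - a j)) x := by
  rw [hasGradientAt_iff_hasFDerivAt]
  have term (j : ι) : HasFDerivAt (fun z => w j * (‖z - a j‖ ^ 2 + ε) ^ q) _ x :=
    (((((hasFDerivAt_id x).sub_const (a j)).norm_sq).add_const ε).rpow_const
      (Or.inl (by simp only [id]; positivity))).const_mul (w j)
  refine (HasFDerivAt.fun_sum (u := Finset.univ) fun j _ => term j).congr_fderiv ?_
  ext v
  simp only [sum_apply, InnerProductSpace.toDual_apply_apply,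
    real_inner_smul_left, sum_inner, Finset.mul_sum, irlsWeight]
  refine Finset.sum_congr rfl fun j _ => ?_
  simp [inner_sub_left]
  ring

theorem gradient_irlsObjective_eq_zero_of_irlsStep_eq_self [CompleteSpace E] [Nonempty ι]
    (hw : ∀ j, 0 < w j) (hε : 0 < ε) {x : E} (hx : irlsStep a w ε q x = x) :
    gradient (irlsObjective a w ε q) x = 0 := by
  have bary := sum_irlsWeight_smul_irlsStep (a := a) (q := q) hw hε x
  rw [hx] at bary
  rw [(hasGradientAt_irlsObjective hε x).gradient]
  simp only [smul_sub, Finset.sum_sub_distrib, ← Finset.sum_smul, bary, sub_self, smul_zero]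

end IRLS

theorem stmt_15
    (d n : ℕ) (hd : 1 ≤ d) (hn : 1 ≤ n)
    (a : Fin n → EuclideanSpace ℝ (Fin d))
    (w : Fin n → ℝ) (hw : ∀ j, 0 < w j)
    (ε : ℝ) (hε : 0 < ε)
    (p : ℝ) (hp0 : 0 < p) (hp2 : p ≤ 2)
    (Φ : EuclideanSpace ℝ (Fin d) → ℝ)
    (hΦ : ∀ x, Φ x = ∑ j, w j * (‖x - a j‖ ^ 2 + ε) ^ (p / 2))
    (x : ℕ → EuclideanSpace ℝ (Fin d))
    (hx : ∀ t, x (t + 1) =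
      (∑ j, w j * (‖x t - a j‖ ^ 2 + ε) ^ (p / 2 - 1))⁻¹ •
        ∑ j, (w j * (‖x t - a j‖ ^ 2 + ε) ^ (p / 2 - 1)) • a j)
    (tm : ℕ → ℕ) (htm : StrictMono tm)
    (xstar : EuclideanSpace ℝ (Fin d))
    (hconv : Tendsto (fun m => x (tm m)) atTop (nhds xstar)) :
    gradient Φ xstar = 0 := by
  have : Nonempty (Fin n) := ⟨⟨0, hn⟩⟩
  obtain rfl : Φ = irlsObjective a w ε (p / 2) := funext hΦ
  exact gradient_irlsObjective_eq_zero_of_irlsStep_eq_self hw hε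
    (irlsStep_eq_self_of_tendsto hw hε (by linarith) (by linarith) hx htm.tendsto_atTop hconv)
end

section
/- If 1 ≤ p ≤ 2 and x* is the unique global minimizer of Φ, then the IRLS iterates converge linearly in cost: there exist ν < 1 and T ≥ 0 such that for all t ≥ T, Φ(x^{(t+1)}) − Φ(x*) ≤ ν (Φ(x^{(t)}) − Φ(x*)). -/
open scoped ContDiff RealInnerProductSpace
open Filter

/-- The tangent line of the concave function `r ↦ r ^ q` at `s` lies above its graph. -/
theorem rpow_le_tangent {q r s : ℝ} (hq0 : 0 ≤ q) (hq1 : q ≤ 1) (hr : 0 < r) (hs : 0 < s) :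
    r ^ q ≤ s ^ q + q * s ^ (q - 1) * (r - s) := by
  have hsq : s ^ (q - 1) = s ^ q / s := Real.rpow_sub_one hs.ne' q
  have hbern := rpow_one_add_le_one_add_mul_self (s := r / s - 1)
    (by linarith [div_pos hr hs]) hq0 hq1
  rw [add_sub_cancel, Real.div_rpow hr.le hs.le, div_le_iff₀ (Real.rpow_pos_of_pos hs q)] at hbern
  calc r ^ q ≤ (1 + q * (r / s - 1)) * s ^ q := hbern
    _ = s ^ q + q * s ^ (q - 1) * (r - s) := by rw [hsq]; field_simp

/-- The function `r ↦ r ^ q` is convex in `√r` when `1 / 2 ≤ q`. -/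
theorem tangent_sqrt_le_rpow {q r s : ℝ} (hq : 1 / 2 ≤ q) (hr : 0 < r) (hs : 0 < s) :
    s ^ q + 2 * q * s ^ (q - 1) * (√(r * s) - s) ≤ r ^ q := by
  have hsq : s ^ (q - 1) = s ^ q / s := Real.rpow_sub_one hs.ne' q
  have hbern := one_add_mul_self_le_rpow_one_add (s := √(r / s) - 1)
    (by linarith [Real.sqrt_nonneg (r / s)]) (p := 2 * q) (by linarith)
  have hsqrt : √(r * s) = s * √(r / s) := by
    rw [show r * s = s ^ 2 * (r / s) by field_simp, Real.sqrt_mul (by positivity),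
      Real.sqrt_sq hs.le]
  rw [add_sub_cancel, Real.sqrt_eq_rpow, ← Real.rpow_mul (div_pos hr hs).le,
    show 1 / 2 * (2 * q) = q by ring, ← Real.sqrt_eq_rpow, Real.div_rpow hr.le hs.le,
    le_div_iff₀ (Real.rpow_pos_of_pos hs q)] at hbern
  calc s ^ q + 2 * q * s ^ (q - 1) * (√(r * s) - s)
      = (1 + 2 * q * (√(r / s) - 1)) * s ^ q := by rw [hsq, hsqrt]; field_simp
    _ ≤ r ^ q := hbern

section InnerProductSpace

variable {E : Type*} [NormedAddCommGroup E] [InnerProductSpace ℝ E]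

/-- A quantitative Cauchy–Schwarz inequality for the vectors `(u, √ε)` and `(v, √ε)`. -/
theorem inner_add_le_sqrt_sub {ε B : ℝ} (hε : 0 < ε) {u v : E}
    (hu : ‖u‖ ^ 2 + ε ≤ B) (hv : ‖v‖ ^ 2 + ε ≤ B) :
    2 * (⟪u, v⟫ + ε) + ε / B * ‖v - u‖ ^ 2 ≤ 2 * √((‖v‖ ^ 2 + ε) * (‖u‖ ^ 2 + ε)) := by
  have hs : 0 < ‖u‖ ^ 2 + ε := by positivity
  have hr : 0 < ‖v‖ ^ 2 + ε := by positivity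
  have hB : 0 < B := hs.trans_le hu
  have hroot_pos : 0 < √((‖v‖ ^ 2 + ε) * (‖u‖ ^ 2 + ε)) := Real.sqrt_pos.2 (mul_pos hr hs)
  have hroot_sq := Real.sq_sqrt (mul_pos hr hs).le
  have hroot_le : √((‖v‖ ^ 2 + ε) * (‖u‖ ^ 2 + ε)) ≤ B :=
    Real.sqrt_le_iff.2 ⟨hB.le, by rw [sq B]; exact mul_le_mul hv hu hs.le hB.le⟩
  generalize √((‖v‖ ^ 2 + ε) * (‖u‖ ^ 2 + ε)) = ρ at *
  have hcs : ⟪u, v⟫ ^ 2 ≤ ‖u‖ ^ 2 * ‖v‖ ^ 2 := by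
    rw [← mul_pow]
    exact sq_le_sq.2 (by simpa using abs_real_inner_le_norm u v)
  have hdist : ‖v - u‖ ^ 2 = ‖v‖ ^ 2 - 2 * ⟪u, v⟫ + ‖u‖ ^ 2 := by
    rw [norm_sub_sq_real, real_inner_comm]
  have hgap : (⟪u, v⟫ + ε) ^ 2 + ε * ‖v - u‖ ^ 2 ≤ ρ ^ 2 := by
    rw [hroot_sq, hdist]; nlinarith
  have hdiv : ε / B * ‖v - u‖ ^ 2 ≤ ε * ‖v - u‖ ^ 2 / ρ := by
    rw [div_mul_eq_mul_div]
    exact div_le_div_of_nonneg_left (by positivity) hroot_pos hroot_le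
  have hdiv' : ε * ‖v - u‖ ^ 2 / ρ ≤ 2 * (ρ - (⟪u, v⟫ + ε)) := by
    rw [div_le_iff₀ hroot_pos]; nlinarith [sq_nonneg (ρ - (⟪u, v⟫ + ε))]
  linarith

/-- Strong convexity of `u ↦ (‖u‖ ^ 2 + ε) ^ q` on bounded sets, for `1 / 2 ≤ q`. -/
theorem rpow_norm_sq_add_strong_convex {ε B q : ℝ} (hε : 0 < ε) (hq : 1 / 2 ≤ q) {u v : E}
    (hu : ‖u‖ ^ 2 + ε ≤ B) (hv : ‖v‖ ^ 2 + ε ≤ B) :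
    q * (‖u‖ ^ 2 + ε) ^ (q - 1) * (2 * ⟪u, v - u⟫ + ε / B * ‖v - u‖ ^ 2) ≤
      (‖v‖ ^ 2 + ε) ^ q - (‖u‖ ^ 2 + ε) ^ q := by
  have htan := tangent_sqrt_le_rpow hq (r := ‖v‖ ^ 2 + ε) (s := ‖u‖ ^ 2 + ε)
    (by positivity) (by positivity)
  have hcoef : 0 ≤ q * (‖u‖ ^ 2 + ε) ^ (q - 1) := mul_nonneg (by linarith) (by positivity)
  have hinner := mul_le_mul_of_nonneg_left (inner_add_le_sqrt_sub hε hu hv) hcoef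
  rw [inner_sub_right, real_inner_self_eq_norm_sq]
  linarith

/-- The weighted mean minimizes the weighted sum of squared distances. -/
theorem sum_mul_norm_sub_sq_le {ι : Type*} [Fintype ι] {m : ι → ℝ} (hm : ∀ j, 0 ≤ m j)
    {a : ι → E} {z : E} (hz : (∑ j, m j) • z = ∑ j, m j • a j) (y : E) :
    ∑ j, m j * ‖z - a j‖ ^ 2 ≤ ∑ j, m j * ‖y - a j‖ ^ 2 := by
  have hcross : ∑ j, m j * ⟪z - a j, y - z⟫ = 0 := by
    simp_rw [← real_inner_smul_left]
    rw [← sum_inner]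
    simp_rw [smul_sub]
    rw [Finset.sum_sub_distrib, ← Finset.sum_smul, hz, sub_self, inner_zero_left]
  have hle : ∑ j, (m j * ‖z - a j‖ ^ 2 + 2 * (m j * ⟪z - a j, y - z⟫)) ≤
      ∑ j, m j * ‖y - a j‖ ^ 2 := by
    refine Finset.sum_le_sum fun j _ => ?_
    have hexp : ‖y - a j‖ ^ 2 = ‖z - a j‖ ^ 2 + 2 * ⟪z - a j, y - z⟫ + ‖y - z‖ ^ 2 := by
      rw [← norm_add_sq_real, sub_add_sub_comm, add_comm z y, add_sub_add_right_eq_sub]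
    rw [hexp]
    nlinarith [mul_nonneg (hm j) (sq_nonneg ‖y - z‖)]
  rwa [Finset.sum_add_distrib, ← Finset.mul_sum, hcross, mul_zero, add_zero] at hle

/-- A weighted mean is bounded by the sum of the norms of its points. -/
theorem norm_weighted_mean_le {ι : Type*} [Fintype ι] {m : ι → ℝ} (hm : ∀ j, 0 ≤ m j)
    (hpos : 0 < ∑ j, m j) {a : ι → E} {z : E} (hz : (∑ j, m j) • z = ∑ j, m j • a j) :
    ‖z‖ ≤ ∑ j, ‖a j‖ := by
  refine le_of_mul_le_mul_left ?_ hpos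
  calc (∑ j, m j) * ‖z‖ = ‖∑ j, m j • a j‖ := by
        rw [← hz, norm_smul, Real.norm_of_nonneg hpos.le]
    _ ≤ ∑ j, m j * ‖a j‖ := by
        refine (norm_sum_le _ _).trans_eq (Finset.sum_congr rfl fun j _ => ?_)
        rw [norm_smul, Real.norm_of_nonneg (hm j)]
    _ ≤ ∑ j, m j * ∑ i, ‖a i‖ := Finset.sum_le_sum fun j _ =>
        mul_le_mul_of_nonneg_left
          (Finset.single_le_sum (fun i _ => norm_nonneg (a i)) (Finset.mem_univ j)) (hm j)
    _ = (∑ j, m j) * ∑ i, ‖a i‖ := (Finset.sum_mul ..).symm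

/-- One reweighted least squares step from `x` to `z` contracts the gap to the cost at `y`
by the factor `1 - ε / B`. -/
theorem irls_step_contraction {ι : Type*} [Fintype ι] {a : ι → E} {w : ι → ℝ}
    (hw : ∀ j, 0 < w j) {ε B q : ℝ} (hε : 0 < ε) (hq : 1 / 2 ≤ q) (hq1 : q ≤ 1) {x y z : E}
    (hxB : ∀ j, ‖x - a j‖ ^ 2 + ε ≤ B) (hyB : ∀ j, ‖y - a j‖ ^ 2 + ε ≤ B) (hB : 0 < B)
    (hz : (∑ j, w j * (‖x - a j‖ ^ 2 + ε) ^ (q - 1)) • z =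
      ∑ j, (w j * (‖x - a j‖ ^ 2 + ε) ^ (q - 1)) • a j) :
    ∑ j, w j * (‖z - a j‖ ^ 2 + ε) ^ q - ∑ j, w j * (‖y - a j‖ ^ 2 + ε) ^ q ≤
      (1 - ε / B) *
        (∑ j, w j * (‖x - a j‖ ^ 2 + ε) ^ q - ∑ j, w j * (‖y - a j‖ ^ 2 + ε) ^ q) := by
  have hq0 : 0 ≤ q := by linarith
  set μ : ι → ℝ := fun j => w j * (‖x - a j‖ ^ 2 + ε) ^ (q - 1) with hμ
  have hμ0 : ∀ j, 0 ≤ μ j := fun j => mul_nonneg (hw j).le (by positivity)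
  set θ := ε / B
  have hθ : 0 ≤ θ := (div_pos hε hB).le
  have hmajor : ∑ j, w j * (‖z - a j‖ ^ 2 + ε) ^ q ≤
      ∑ j, (w j * (‖x - a j‖ ^ 2 + ε) ^ q - q * (μ j * ‖x - a j‖ ^ 2)) +
        q * ∑ j, μ j * ‖z - a j‖ ^ 2 := by
    rw [Finset.mul_sum, ← Finset.sum_add_distrib]
    refine Finset.sum_le_sum fun j _ => ?_
    have htan := mul_le_mul_of_nonneg_left (rpow_le_tangent hq0 hq1
      (r := ‖z - a j‖ ^ 2 + ε) (s := ‖x - a j‖ ^ 2 + ε) (by positivity) (by positivity)) (hw j).le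
    simp only [hμ]
    linarith
  have hmean := mul_le_mul_of_nonneg_left
    (sum_mul_norm_sub_sq_le hμ0 hz (x + θ • (y - x))) hq0
  have hconvex : ∑ j, (w j * (‖x - a j‖ ^ 2 + ε) ^ q - q * (μ j * ‖x - a j‖ ^ 2)) +
        q * ∑ j, μ j * ‖x + θ • (y - x) - a j‖ ^ 2 ≤
      ∑ j, ((1 - θ) * (w j * (‖x - a j‖ ^ 2 + ε) ^ q) +
        θ * (w j * (‖y - a j‖ ^ 2 + ε) ^ q)) := by
    rw [Finset.mul_sum, ← Finset.sum_add_distrib]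
    refine Finset.sum_le_sum fun j _ => ?_
    have hsc := mul_le_mul_of_nonneg_left
      (rpow_norm_sq_add_strong_convex hε hq (hxB j) (hyB j)) (mul_nonneg hθ (hw j).le)
    rw [sub_sub_sub_cancel_right] at hsc
    have hexp : ‖x + θ • (y - x) - a j‖ ^ 2 =
        ‖x - a j‖ ^ 2 + 2 * (θ * ⟪x - a j, y - x⟫) + θ ^ 2 * ‖y - x‖ ^ 2 := by
      rw [add_sub_right_comm, norm_add_sq_real, real_inner_smul_right, norm_smul, mul_pow,
        Real.norm_eq_abs, sq_abs]
    rw [hexp]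
    simp only [hμ]
    linarith
  rw [Finset.sum_add_distrib, ← Finset.mul_sum, ← Finset.mul_sum] at hconvex
  linarith

end InnerProductSpace

theorem stmt_18
    (d n : ℕ) (hd : 1 ≤ d) (hn : 1 ≤ n)
    (a : Fin n → EuclideanSpace ℝ (Fin d))
    (w : Fin n → ℝ) (hw : ∀ j, 0 < w j)
    (ε : ℝ) (hε : 0 < ε)
    (p : ℝ) (hp1 : 1 ≤ p) (hp2 : p ≤ 2)
    (Φ : EuclideanSpace ℝ (Fin d) → ℝ)
    (hΦ : ∀ x, Φ x = ∑ j, w j * (‖x - a j‖ ^ 2 + ε) ^ (p / 2))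
    (x : ℕ → EuclideanSpace ℝ (Fin d))
    (hx : ∀ t, x (t + 1) =
      (∑ j, w j * (‖x t - a j‖ ^ 2 + ε) ^ (p / 2 - 1))⁻¹ •
        ∑ j, (w j * (‖x t - a j‖ ^ 2 + ε) ^ (p / 2 - 1)) • a j)
    (xstar : EuclideanSpace ℝ (Fin d))
    (hmin : ∀ y, Φ xstar ≤ Φ y)
    (huniq : ∀ z, (∀ y, Φ z ≤ Φ y) → z = xstar) :
    ∃ ν < (1 : ℝ), ∃ T : ℕ, ∀ t ≥ T,
      Φ (x (t + 1)) - Φ xstar ≤ ν * (Φ (x t) - Φ xstar) := by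
  have : Nonempty (Fin n) := ⟨⟨0, hn⟩⟩
  have hμ : ∀ t j, 0 < w j * (‖x t - a j‖ ^ 2 + ε) ^ (p / 2 - 1) := fun t j =>
    mul_pos (hw j) (by positivity)
  have hμsum : ∀ t, 0 < ∑ j, w j * (‖x t - a j‖ ^ 2 + ε) ^ (p / 2 - 1) := fun t =>
    Finset.sum_pos (fun j _ => hμ t j) Finset.univ_nonempty
  have hmean : ∀ t, (∑ j, w j * (‖x t - a j‖ ^ 2 + ε) ^ (p / 2 - 1)) • x (t + 1) =
      ∑ j, (w j * (‖x t - a j‖ ^ 2 + ε) ^ (p / 2 - 1)) • a j := fun t => by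
    rw [hx t, smul_inv_smul₀ (hμsum t).ne']
  set A := ∑ j, ‖a j‖
  have hA0 : 0 ≤ A := Finset.sum_nonneg fun j _ => norm_nonneg (a j)
  have haA : ∀ j, ‖a j‖ ≤ A := fun j =>
    Finset.single_le_sum (fun i _ => norm_nonneg (a i)) (Finset.mem_univ j)
  have hbound : ∀ z, ‖z‖ ≤ ‖xstar‖ + A → ∀ j,
      ‖z - a j‖ ^ 2 + ε ≤ (‖xstar‖ + 2 * A) ^ 2 + ε := fun z hz j => by
    have hdist : ‖z - a j‖ ≤ ‖xstar‖ + 2 * A := by linarith [norm_sub_le z (a j), haA j]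
    gcongr
  have hB : 0 < (‖xstar‖ + 2 * A) ^ 2 + ε := by positivity
  refine ⟨1 - ε / ((‖xstar‖ + 2 * A) ^ 2 + ε), sub_lt_self 1 (div_pos hε hB), 1, fun t ht => ?_⟩
  obtain ⟨k, rfl⟩ := Nat.exists_eq_add_of_le' ht
  have hxA : ‖x (k + 1)‖ ≤ A :=
    norm_weighted_mean_le (fun j => (hμ k j).le) (hμsum k) (hmean k)
  rw [hΦ, hΦ, hΦ]
  exact irls_step_contraction hw hε (by linarith) (by linarith)
    (hbound _ (by linarith [norm_nonneg xstar])) (hbound _ (by linarith)) hB (hmean (k + 1))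
end
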